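/- Let E be a finite-dimensional complex vector space of dimension n ≥ 1 and let L = L_{−1} ⊕ L_0 ⊕ L_1 be an irreducible graded Lie subalgebra of Vect_pol(E) with L_{−1} = Vect_{−1}(E) and L_1 ≠ 0. If L' is a Lie subalgebra of Vect_pol(E) containing L properly (L ⊊ L'), then L' is infinite-dimensional and L' is a simple Lie algebra. -/

import Mathlib

/-!
The proof rests on one remark: by transitivity (repeated differentiation of a nonzero field ends in
a nonzero constant one) and irreducibility, every nonzero subspace stable under `L` contains all the
constant fields (`const_le_of_stable`).

Structure of `L`. It has no nonzero abelian ideal, since such an ideal would contain the constants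
and their brackets with `L₁`; hence `L` is semisimple (`hasTrivialRadical`). As derivations of `L`
are inner, the Euler field `e` lies in `L` (`euler_mem`). An ideal and its Killing complement cannot
both contain the constants, so `L` is simple (`le_of_stable`).

Infinite dimension. If `L'` is finite-dimensional, the orthogonal of `L` for the Killing form of `L'`
is stable under `L`. If it were nonzero, it would contain the constants, hence `L`, hence `e`; but
`tr (ad e)²` is a sum of squares of integers, not all zero (`killingForm_euler_ne_zero`). So the
orthogonal of `L` vanishes and `L' = L` (`eq_of_finiteDimensional`).

Simplicity. A nonzero ideal `S` of `L'` contains the constants, hence `L`, hence `e`, hence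
`⁅e, L'⁆`. Modulo `⁅e, L'⁆` only elements of degree `0` remain (`mem_of_sum`). These normalize the
degree-`0` part of `S`, which is an irreducible Lie algebra of endomorphisms of the constants
containing the scalars, and such an algebra is its own normalizer (`mem_of_normalizes`).

The argument is carried out in an abstract Lie algebra with the properties listed in `IsTransitive`,
which are verified for polynomial vector fields in `isTransitive_vect`.
-/

open MvPolynomial

/-- The Lie algebra of polynomial vector fields on `E = 𝕜^n`, realized as the
derivations of the polynomial algebra `𝕜[x_1, …, x_n]`. -/
abbrev Vect (𝕜 : Type*) [Field 𝕜] (n : ℕ) : Type _ :=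
  Derivation 𝕜 (MvPolynomial (Fin n) 𝕜) (MvPolynomial (Fin n) 𝕜)

variable (𝕜 : Type*) [Field 𝕜] (n : ℕ)

/-- The Euler vector field `ℰ = Σ x^j ∂_j`. -/
noncomputable def euler : Vect 𝕜 n :=
  MvPolynomial.mkDerivation 𝕜 fun i => MvPolynomial.X i

/-- `Vect_p(E)`: the eigenspace of `ad(ℰ)` for the eigenvalue `p`, i.e. the vector fields
with homogeneous coefficients of degree `p+1`. -/
noncomputable def VectP (p : ℤ) : Submodule 𝕜 (Vect 𝕜 n) :=
  Module.End.eigenspace (LieAlgebra.ad 𝕜 (Vect 𝕜 n) (euler 𝕜 n)) ((p : 𝕜))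

/-- A Lie subalgebra `L` of `Vect_pol(E)` is graded if `L = ⊕_{p ≥ -1} (L ∩ Vect_p(E))`. -/
def IsGradedSubalg (L : LieSubalgebra 𝕜 (Vect 𝕜 n)) : Prop :=
  L.toSubmodule = ⨆ p ≥ (-1 : ℤ), (L.toSubmodule ⊓ VectP 𝕜 n p)

/-- A Lie subalgebra `L` of `Vect_pol(E)` is maximal if the only subalgebras containing it
are `L` itself and `Vect_pol(E)`. -/
def IsMaxSubalg (L : LieSubalgebra 𝕜 (Vect 𝕜 n)) : Prop :=
  ∀ L' : LieSubalgebra 𝕜 (Vect 𝕜 n), L ≤ L' → L' = L ∨ L' = ⊤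

/-- A graded subalgebra `L` is irreducible if the representation of `L₀ = L ∩ Vect_0(E)` on
`L₋₁ = L ∩ Vect_{-1}(E)` given by the adjoint action is irreducible. -/
def IsIrreducibleRep (L : LieSubalgebra 𝕜 (Vect 𝕜 n)) : Prop :=
  L.toSubmodule ⊓ VectP 𝕜 n (-1) ≠ ⊥ ∧
    ∀ F : Submodule 𝕜 (Vect 𝕜 n), F ≤ L.toSubmodule ⊓ VectP 𝕜 n (-1) →
      (∀ x ∈ L.toSubmodule ⊓ VectP 𝕜 n 0, ∀ y ∈ F, ⁅x, y⁆ ∈ F) →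
      F = ⊥ ∨ F = L.toSubmodule ⊓ VectP 𝕜 n (-1)

/-! ### Vector fields in coordinates -/

section Coordinates

variable {n}

/-- The coefficient of the monomial `x^m` in the `i`-th component of the vector field `D`. -/
noncomputable def vcoeff (i : Fin n) (m : Fin n →₀ ℕ) : Vect ℂ n →ₗ[ℂ] ℂ where
  toFun D := coeff m (D (X i))
  map_add' D D' := by simp
  map_smul' c D := by simp

lemma vect_ext {D D' : Vect ℂ n} (h : ∀ i m, vcoeff i m D = vcoeff i m D') : D = D' :=
  MvPolynomial.derivation_ext fun i => MvPolynomial.ext _ _ fun m => h i m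

lemma derivation_sum_apply {ι : Type*} (s : Finset ι) (D : ι → Vect ℂ n)
    (f : MvPolynomial (Fin n) ℂ) : (∑ i ∈ s, D i) f = ∑ i ∈ s, D i f := by
  rw [← Derivation.coeFnAddMonoidHom_apply, map_sum, Finset.sum_apply]
  rfl

lemma euler_apply (f : MvPolynomial (Fin n) ℂ) :
    euler ℂ n f = ∑ i, X i * pderiv i f := by
  have : euler ℂ n = ∑ i, (X i : MvPolynomial (Fin n) ℂ) • pderiv i := by
    apply MvPolynomial.derivation_ext
    intro j
    simp only [euler, mkDerivation_X]
    rw [derivation_sum_apply, Finset.sum_eq_single j]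
    · simp
    · intro b _ hb
      simp [pderiv_X_of_ne hb.symm]
    · simp
  rw [this, derivation_sum_apply]
  simp

lemma coeff_euler (m : Fin n →₀ ℕ) (f : MvPolynomial (Fin n) ℂ) :
    coeff m (euler ℂ n f) = (m.degree : ℂ) * coeff m f := by
  induction f using MvPolynomial.induction_on' with
  | monomial s a =>
    rw [euler_apply, (isHomogeneous_monomial a rfl).sum_X_mul_pderiv, coeff_smul, coeff_monomial]
    split_ifs with h
    · simp [h]
    · simp
  | add p q hp hq => simp [hp, hq, mul_add]

lemma vcoeff_lie_euler (i : Fin n) (m : Fin n →₀ ℕ) (D : Vect ℂ n) :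
    vcoeff i m ⁅euler ℂ n, D⁆ = ((m.degree : ℂ) - 1) * vcoeff i m D := by
  simp only [vcoeff, LinearMap.coe_mk, AddHom.coe_mk, Derivation.commutator_apply, coeff_sub,
    coeff_euler]
  simp only [euler, mkDerivation_X]
  ring

lemma vcoeff_lie_pderiv (i j : Fin n) (m : Fin n →₀ ℕ) (D : Vect ℂ n) :
    vcoeff i m ⁅(pderiv j : Vect ℂ n), D⁆
      = vcoeff i (m + Finsupp.single j 1) D * ((m j : ℂ) + 1) := by
  simp only [vcoeff, LinearMap.coe_mk, AddHom.coe_mk, Derivation.commutator_apply, coeff_sub,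
    coeff_pderiv]
  have : D (pderiv j (X i : MvPolynomial (Fin n) ℂ)) = 0 := by
    classical
    rw [pderiv_X]
    by_cases h : j = i
    · subst h; simp
    · rw [Pi.single_eq_of_ne (by tauto)]; simp
  rw [this]; simp

lemma mem_VectP {p : ℤ} {D : Vect ℂ n} :
    D ∈ VectP ℂ n p ↔ ⁅euler ℂ n, D⁆ = (p : ℂ) • D := by
  simp [VectP]

lemma mem_VectP_iff_vcoeff {p : ℤ} {D : Vect ℂ n} :
    D ∈ VectP ℂ n p ↔ ∀ i m, vcoeff i m D ≠ 0 → (m.degree : ℤ) = p + 1 := by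
  rw [mem_VectP]
  constructor
  · intro h i m hm
    have h1 := vcoeff_lie_euler i m D
    rw [h, map_smul, smul_eq_mul] at h1
    have h2 := mul_right_cancel₀ hm h1
    have : ((m.degree : ℤ) : ℂ) = ((p + 1 : ℤ) : ℂ) := by push_cast; rw [h2]; ring
    exact_mod_cast this
  · intro h
    refine vect_ext fun i m => ?_
    rw [vcoeff_lie_euler, map_smul, smul_eq_mul]
    by_cases hm : vcoeff i m D = 0
    · simp [hm]
    · have : ((m.degree : ℤ) : ℂ) = ((p + 1 : ℤ) : ℂ) := by rw [h i m hm]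
      push_cast at this
      rw [this]; ring

lemma pderiv_mem_VectP (j : Fin n) : (pderiv j : Vect ℂ n) ∈ VectP ℂ n (-1) := by
  rw [mem_VectP_iff_vcoeff]
  intro i m hm
  classical
  simp only [vcoeff, LinearMap.coe_mk, AddHom.coe_mk, pderiv_X, Pi.single_apply] at hm
  split_ifs at hm with h
  · rw [coeff_one] at hm
    have : m = 0 := by by_contra h0; exact hm (if_neg (Ne.symm h0))
    simp [this]
  · simp at hm

lemma pderiv_ne_zero (j : Fin n) : (pderiv j : Vect ℂ n) ≠ 0 := by
  intro h
  have := congrArg (fun D : Vect ℂ n => D (X j)) h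
  simp at this

lemma mem_VectP_neg_one_of_lie_pderiv {D : Vect ℂ n}
    (h : ∀ j, ⁅(pderiv j : Vect ℂ n), D⁆ = 0) : D ∈ VectP ℂ n (-1) := by
  rw [mem_VectP_iff_vcoeff]
  intro i m hm
  by_contra hne
  have hm0 : m ≠ 0 := by rintro rfl; simp at hne
  obtain ⟨j, hj⟩ := Finsupp.ne_iff.mp hm0
  have hle : Finsupp.single j 1 ≤ m := by
    rw [Finsupp.single_le_iff]
    simp at hj; omega
  have := vcoeff_lie_pderiv i j (m - Finsupp.single j 1) D
  rw [h j, map_zero, tsub_add_cancel_of_le hle] at this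
  rcases mul_eq_zero.mp this.symm with h' | h'
  · exact hm h'
  · exact Nat.cast_add_one_ne_zero _ h'

lemma exists_degree_bound (D : Vect ℂ n) :
    ∃ N, ∀ i m, vcoeff i m D ≠ 0 → m.degree < N := by
  refine ⟨(Finset.univ.sup fun i => (D (X i)).totalDegree) + 1, fun i m hm => ?_⟩
  have h1 : m.degree ≤ (D (X i)).totalDegree := by
    have := le_totalDegree (mem_support_iff.mpr hm)
    exact this
  have h2 := Finset.le_sup (f := fun i => (D (X i)).totalDegree) (Finset.mem_univ i)
  beta_reduce at h2
  omega

/-- Transitivity: repeated differentiation of a nonzero polynomial vector field ends in a nonzero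
constant vector field. -/
lemma exists_const_mem {S : Submodule ℂ (Vect ℂ n)} (hS : S ≠ ⊥)
    (hstab : ∀ j, ∀ D ∈ S, ⁅(pderiv j : Vect ℂ n), D⁆ ∈ S) :
    S ⊓ VectP ℂ n (-1) ≠ ⊥ := by
  obtain ⟨D, hD, hD0⟩ := Submodule.exists_mem_ne_zero_of_ne_bot hS
  obtain ⟨N, hN⟩ := exists_degree_bound D
  induction N generalizing D with
  | zero =>
    refine absurd (vect_ext fun i m => ?_) hD0
    by_contra h
    exact absurd (hN i m (by simpa using h)) (by omega)
  | succ N ih =>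
    by_cases h : ∀ j, ⁅(pderiv j : Vect ℂ n), D⁆ = 0
    · intro hbot
      have : D ∈ S ⊓ VectP ℂ n (-1) := ⟨hD, mem_VectP_neg_one_of_lie_pderiv h⟩
      rw [hbot] at this
      exact hD0 (by simpa using this)
    · push Not at h
      obtain ⟨j, hj⟩ := h
      refine ih _ (hstab j D hD) hj fun i m hm => ?_
      rw [vcoeff_lie_pderiv] at hm
      have := hN i _ (left_ne_zero_of_mul hm)
      rw [map_add, Finsupp.degree_single] at this
      omega

lemma finiteDimensional_VectP (p : ℤ) : FiniteDimensional ℂ (VectP ℂ n p) := by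
  let N := (p + 1).toNat
  let φ : VectP ℂ n p →ₗ[ℂ] (Fin n → restrictTotalDegree (Fin n) ℂ N) :=
    { toFun D i := ⟨D.1 (X i), by
        rw [mem_restrictTotalDegree]
        refine Finset.sup_le fun m hm => ?_
        have := mem_VectP_iff_vcoeff.mp D.2 i m (mem_support_iff.mp hm)
        change m.degree ≤ N
        omega⟩
      map_add' := fun _ _ => by ext; simp
      map_smul' := fun _ _ => by ext; simp }
  refine FiniteDimensional.of_injective φ fun D D' h => ?_
  refine Subtype.ext (MvPolynomial.derivation_ext fun i => ?_)
  exact congrArg Subtype.val (congrFun h i)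

end Coordinates

/-! ### Lie algebras graded by an Euler element -/

section Graded

variable {A : Type*} [LieRing A] [LieAlgebra ℂ A]

/-- The part of degree `p` of a Lie algebra with respect to the element `e`. -/
def eig (e : A) (p : ℤ) : Submodule ℂ A :=
  Module.End.eigenspace (LieAlgebra.ad ℂ A e) (p : ℂ)

lemma mem_eig {e x : A} {p : ℤ} : x ∈ eig e p ↔ ⁅e, x⁆ = (p : ℂ) • x := by
  simp [eig]

lemma lie_mem_eig {e x y : A} {p q : ℤ} (hx : x ∈ eig e p) (hy : y ∈ eig e q) :
    ⁅x, y⁆ ∈ eig e (p + q) := by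
  rw [mem_eig] at *
  rw [leibniz_lie, hx, hy, smul_lie, lie_smul, ← add_smul]
  push_cast; rfl

lemma eq_zero_of_mem_eig {e x : A} {p q : ℤ} (hpq : p ≠ q) (hx : x ∈ eig e p)
    (hx' : x ∈ eig e q) : x = 0 := by
  rw [mem_eig] at hx hx'
  rw [hx', ← sub_eq_zero, ← sub_smul, smul_eq_zero, sub_eq_zero] at hx
  exact hx.resolve_left fun h => hpq (by exact_mod_cast h.symm)

/-- The properties of the Lie algebra of polynomial vector fields used below: `e` plays the role of
the Euler field, `d` that of the coordinate fields `∂_j`, and `eig e (-1)` is the space of constant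
fields. -/
structure IsTransitive {ι : Type*} (e : A) (d : ι → A) : Prop where
  nonempty : Nonempty ι
  d_ne_zero : ∀ j, d j ≠ 0
  d_mem : ∀ j, d j ∈ eig e (-1)
  mem_of_lie_eq_zero : ∀ x, (∀ j, ⁅d j, x⁆ = 0) → x ∈ eig e (-1)
  inf_ne_bot : ∀ S : Submodule ℂ A, S ≠ ⊥ → (∀ j, ∀ x ∈ S, ⁅d j, x⁆ ∈ S) → S ⊓ eig e (-1) ≠ ⊥
  finite : ∀ p, FiniteDimensional ℂ (eig e p)
  exists_sum : ∀ x, ∃ (s : Finset ℤ) (u : ℤ → A), (∀ p, u p ∈ eig e p) ∧ x = ∑ p ∈ s, u p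
  sq_eigenvalue : ∀ x : A, x ≠ 0 → ∀ c : ℂ, ⁅e, ⁅e, x⁆⁆ = c • x → ∃ k : ℕ, c = k

/-- An irreducible three-graded subalgebra `L = L₋₁ ⊕ L₀ ⊕ L₁` containing all constant fields, with
`L₁ ≠ 0`. -/
structure IsThreeGraded (e : A) (L : LieSubalgebra ℂ A) : Prop where
  le_sup : L.toSubmodule ≤ (L.toSubmodule ⊓ eig e (-1)) ⊔ (L.toSubmodule ⊓ eig e 0) ⊔
    (L.toSubmodule ⊓ eig e 1)
  const_le : eig e (-1) ≤ L.toSubmodule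
  irreducible : ∀ F : Submodule ℂ A, F ≤ eig e (-1) →
    (∀ x ∈ L.toSubmodule ⊓ eig e 0, ∀ y ∈ F, ⁅x, y⁆ ∈ F) → F = ⊥ ∨ F = eig e (-1)
  ne_bot : L.toSubmodule ⊓ eig e 1 ≠ ⊥

/-- An element normalizing a finite-dimensional semisimple subalgebra acts on it as an inner
derivation. -/
lemma exists_lie_eq_of_hasTrivialRadical (K : LieSubalgebra ℂ A) [FiniteDimensional ℂ K]
    [LieAlgebra.HasTrivialRadical ℂ K] (z : A) (hz : ∀ x ∈ K, ⁅z, x⁆ ∈ K) :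
    ∃ y ∈ K, ∀ x ∈ K, ⁅z, x⁆ = ⁅y, x⁆ := by
  let D : LieDerivation ℂ K K :=
    { toFun := fun x => ⟨⁅z, x.1⁆, hz x.1 x.2⟩
      map_add' := fun x y => by ext; simp
      map_smul' := fun c x => by ext; simp
      leibniz' := fun a b => by
        ext
        simp only [LinearMap.coe_mk, AddHom.coe_mk, LieSubalgebra.coe_bracket,
          AddSubgroupClass.coe_sub]
        rw [leibniz_lie z a.1 b.1, ← lie_skew b.1 ⁅z, a.1⁆]
        abel }
  obtain ⟨y, hy⟩ := LieDerivation.IsKilling.exists_eq_ad D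
  refine ⟨y.1, y.2, fun x hx => ?_⟩
  have := congrArg (fun E : LieDerivation ℂ K K => ((E ⟨x, hx⟩ : K) : A)) hy
  simp only [LieDerivation.ad_apply_apply] at this
  exact this.symm

namespace IsThreeGraded

variable {ι : Type*} {e : A} {d : ι → A} {L : LieSubalgebra ℂ A}

/-- A nonzero `L`-stable subspace meets the constants by transitivity, hence contains all of them by
irreducibility. -/
lemma const_le_of_stable (hL : IsThreeGraded e L) (hA : IsTransitive e d) {S : Submodule ℂ A}
    (hS : S ≠ ⊥) (hstab : ∀ x ∈ L, ∀ y ∈ S, ⁅x, y⁆ ∈ S) : eig e (-1) ≤ S := by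
  have h1 := hA.inf_ne_bot S hS fun j x hx => hstab _ (hL.const_le (hA.d_mem j)) x hx
  have h2 := hL.irreducible (S ⊓ eig e (-1)) inf_le_right ?_
  · exact inf_eq_right.mp (h2.resolve_left h1)
  · rintro x ⟨hx, hx0⟩ y ⟨hy, hy1⟩
    exact ⟨hstab x hx y hy, by simpa using lie_mem_eig hx0 hy1⟩

/-- A nonzero element of `L₁` is a quadratic field, so one of its second derivatives is nonzero. -/
lemma exists_lie_lie_ne_zero (hL : IsThreeGraded e L) (hA : IsTransitive e d) :
    ∃ y ∈ L, ∃ i j, ⁅d j, ⁅d i, y⁆⁆ ≠ 0 := by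
  obtain ⟨y, ⟨hy, hy1⟩, hy0⟩ := Submodule.exists_mem_ne_zero_of_ne_bot hL.ne_bot
  by_contra! h
  refine hy0 (eq_zero_of_mem_eig (by norm_num) hy1 (hA.mem_of_lie_eq_zero y fun i => ?_))
  refine eq_zero_of_mem_eig (p := 0) (q := -1) (by norm_num) ?_
    (hA.mem_of_lie_eq_zero _ fun j => h y hy i j)
  simpa using lie_mem_eig (hA.d_mem i) hy1

lemma finiteDimensional (hL : IsThreeGraded e L) (hA : IsTransitive e d) :
    FiniteDimensional ℂ L := by
  have := hA.finite
  have : FiniteDimensional ℂ (eig e (-1) ⊔ eig e 0 ⊔ eig e 1 : Submodule ℂ A) := inferInstance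
  exact Submodule.finiteDimensional_of_le (S₁ := L.toSubmodule)
    (S₂ := eig e (-1) ⊔ eig e 0 ⊔ eig e 1)
    (hL.le_sup.trans (sup_le_sup (sup_le_sup inf_le_right inf_le_right) inf_le_right))

/-- The image in `A` of an ideal of a subalgebra. -/
def idealImage (K : LieSubalgebra ℂ A) (I : LieIdeal ℂ K) : Submodule ℂ A :=
  I.toSubmodule.map K.toSubmodule.subtype

lemma mem_idealImage {K : LieSubalgebra ℂ A} {I : LieIdeal ℂ K} {x : A} :
    x ∈ idealImage K I ↔ ∃ hx : x ∈ K, (⟨x, hx⟩ : K) ∈ I := by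
  constructor
  · rintro ⟨y, hy, rfl⟩
    exact ⟨y.2, hy⟩
  · rintro ⟨hx, hI⟩
    exact ⟨⟨x, hx⟩, hI, rfl⟩

lemma lie_mem_idealImage {K : LieSubalgebra ℂ A} {I : LieIdeal ℂ K} {x y : A} (hx : x ∈ K)
    (hy : y ∈ idealImage K I) : ⁅x, y⁆ ∈ idealImage K I := by
  obtain ⟨hy, hI⟩ := mem_idealImage.mp hy
  exact mem_idealImage.mpr ⟨K.lie_mem hx hy, lie_mem_right ℂ K I ⟨x, hx⟩ ⟨y, hy⟩ hI⟩

lemma idealImage_ne_bot {K : LieSubalgebra ℂ A} {I : LieIdeal ℂ K} (hI : I ≠ ⊥) :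
    idealImage K I ≠ ⊥ := by
  intro h
  refine hI ((LieSubmodule.eq_bot_iff I).mpr fun x hx => ?_)
  have : x.1 ∈ idealImage K I := mem_idealImage.mpr ⟨x.2, hx⟩
  rw [h, Submodule.mem_bot] at this
  exact Subtype.ext this

/-- A nonzero ideal contains the constants, hence the nonzero second brackets
`⁅∂_j, ⁅∂_i, y⁆⁆` with `y ∈ L₁` lie in its derived algebra: it cannot be abelian. -/
lemma hasTrivialRadical (hL : IsThreeGraded e L) (hA : IsTransitive e d) :
    LieAlgebra.HasTrivialRadical ℂ L := by
  rw [LieAlgebra.hasTrivialRadical_iff_no_abelian_ideals]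
  intro I hI
  by_contra hbot
  have hc := hL.const_le_of_stable hA (idealImage_ne_bot hbot) fun x hx y hy =>
    lie_mem_idealImage hx hy
  obtain ⟨y, hy, i, j, hne⟩ := hL.exists_lie_lie_ne_zero hA
  obtain ⟨hj, hj'⟩ := mem_idealImage.mp (hc (hA.d_mem j))
  have hi : ⁅d i, y⁆ ∈ idealImage L I := by
    rw [← lie_skew]
    exact neg_mem (lie_mem_idealImage hy (hc (hA.d_mem i)))
  obtain ⟨hi, hi'⟩ := mem_idealImage.mp hi
  have h0 : ⁅(⟨⟨_, hj⟩, hj'⟩ : I), (⟨⟨_, hi⟩, hi'⟩ : I)⁆ = 0 := trivial_lie_zero _ _ _ _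
  exact hne (congrArg (fun z : I => ((z : L) : A)) h0)

/-- `ad e` is a derivation of the semisimple algebra `L`, hence equals `ad y` on `L` for some `y ∈ L`;
then `e - y` commutes with the constants, so it is itself constant and lies in `L`. -/
lemma euler_mem (hL : IsThreeGraded e L) (hA : IsTransitive e d) : e ∈ L := by
  have := hL.finiteDimensional hA
  have := hL.hasTrivialRadical hA
  have key : ∀ p : ℤ, ∀ x ∈ L.toSubmodule ⊓ eig e p, ⁅e, x⁆ ∈ L := fun p x hx => by
    rw [mem_eig.mp hx.2]
    exact L.smul_mem _ hx.1
  obtain ⟨y, hy, h⟩ := exists_lie_eq_of_hasTrivialRadical L e fun x hx => by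
    obtain ⟨w, hw, c, hc, rfl⟩ := Submodule.mem_sup.mp (hL.le_sup hx)
    obtain ⟨a, ha, b, hb, rfl⟩ := Submodule.mem_sup.mp hw
    rw [lie_add, lie_add]
    exact add_mem (add_mem (key _ a ha) (key _ b hb)) (key _ c hc)
  have h1 : e - y ∈ L := hL.const_le (hA.mem_of_lie_eq_zero _ fun j => by
    rw [← lie_skew, sub_lie, h _ (hL.const_le (hA.d_mem j)), sub_self, neg_zero])
  simpa using add_mem h1 hy

/-- `L` is simple: an ideal and its Killing complement cannot both contain the constants. -/
lemma le_of_stable (hL : IsThreeGraded e L) (hA : IsTransitive e d) {S : Submodule ℂ A}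
    (hS : S ⊓ L.toSubmodule ≠ ⊥) (hstab : ∀ x ∈ L, ∀ y ∈ S, ⁅x, y⁆ ∈ S) : L.toSubmodule ≤ S := by
  have := hL.finiteDimensional hA
  have := hL.hasTrivialRadical hA
  let I : LieIdeal ℂ L :=
    { S.comap L.toSubmodule.subtype with
      lie_mem := fun {x y} hy => hstab x.1 x.2 y.1 hy }
  have hI : I ≠ ⊥ := by
    obtain ⟨x, ⟨hx, hx'⟩, hx0⟩ := Submodule.exists_mem_ne_zero_of_ne_bot hS
    intro h
    have : (⟨x, hx'⟩ : L) ∈ I := hx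
    rw [h, LieSubmodule.mem_bot] at this
    exact hx0 (congrArg Subtype.val this)
  have hc := I.isCompl_killingCompl
  have hJ : I.killingCompl = ⊥ := by
    by_contra hJ
    obtain ⟨j⟩ := hA.nonempty
    have c1 := hL.const_le_of_stable hA (idealImage_ne_bot hI) (fun x hx y hy =>
      lie_mem_idealImage hx hy) (hA.d_mem j)
    have c2 := hL.const_le_of_stable hA (idealImage_ne_bot hJ) (fun x hx y hy =>
      lie_mem_idealImage hx hy) (hA.d_mem j)
    obtain ⟨hj, c1⟩ := mem_idealImage.mp c1
    obtain ⟨_, c2⟩ := mem_idealImage.mp c2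
    have : (⟨d j, hj⟩ : L) ∈ I ⊓ I.killingCompl := ⟨c1, c2⟩
    rw [hc.inf_eq_bot, LieSubmodule.mem_bot] at this
    exact hA.d_ne_zero j (congrArg Subtype.val this)
  have hT : I = ⊤ := by simpa [hJ] using hc.sup_eq_top
  intro x hx
  have : (⟨x, hx⟩ : L) ∈ I := hT ▸ LieSubmodule.mem_top _
  exact this

lemma sum_ne_zero_of_natCast {s : Multiset ℂ} (hs : ∀ c ∈ s, ∃ k : ℕ, c = k) (h1 : 1 ∈ s) :
    s.sum ≠ 0 := by
  obtain ⟨t, rfl⟩ := Multiset.exists_cons_of_mem h1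
  have ht : ∀ c ∈ t, ∃ k : ℕ, c = k := fun c hc => hs c (Multiset.mem_cons_of_mem hc)
  have : ∃ k : ℕ, t.sum = k := by
    clear hs h1
    induction t using Multiset.induction with
    | empty => exact ⟨0, by simp⟩
    | cons a t ih =>
      obtain ⟨k, hk⟩ := ih fun c hc => ht c (Multiset.mem_cons_of_mem hc)
      obtain ⟨l, hl⟩ := ht a (Multiset.mem_cons_self a t)
      exact ⟨l + k, by simp [hk, hl]⟩
  obtain ⟨k, hk⟩ := this
  rw [Multiset.sum_cons, hk, add_comm]
  exact Nat.cast_add_one_ne_zero k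

-- the commutator bracket on endomorphisms
attribute [local instance] LieRing.ofAssociativeRing

/-- All eigenvalues of `(ad e)²` are natural numbers and `1` is one of them (on the constants), so
the trace of `(ad e)²` does not vanish. -/
lemma killingForm_euler_ne_zero (hL : IsThreeGraded e L) (hA : IsTransitive e d)
    {L' : LieSubalgebra ℂ A} (hle : L ≤ L') [FiniteDimensional ℂ L'] (he : e ∈ L') :
    killingForm ℂ L' ⟨e, he⟩ ⟨e, he⟩ ≠ 0 := by
  rw [killingForm_apply_apply]
  set T : Module.End ℂ L' := LieAlgebra.ad ℂ L' ⟨e, he⟩ ∘ₗ LieAlgebra.ad ℂ L' ⟨e, he⟩ with hT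
  have hTa : ∀ x : L', ((T x : L') : A) = ⁅e, ⁅e, (x : A)⁆⁆ := fun x => rfl
  rw [Module.End.trace_eq_sum_roots_charpoly_of_splits (IsAlgClosed.splits _)]
  apply sum_ne_zero_of_natCast
  · intro c hc
    rw [Polynomial.mem_roots', ← Module.End.hasEigenvalue_iff_isRoot_charpoly] at hc
    obtain ⟨x, hx⟩ := hc.2.exists_hasEigenvector
    refine hA.sq_eigenvalue x.1 (fun h => hx.2 (Subtype.ext h)) c ?_
    rw [← hTa, hx.apply_eq_smul]
    rfl
  · rw [Polynomial.mem_roots (LinearMap.charpoly_monic T).ne_zero,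
      ← Module.End.hasEigenvalue_iff_isRoot_charpoly]
    obtain ⟨j⟩ := hA.nonempty
    have hj : d j ∈ L' := hle (hL.const_le (hA.d_mem j))
    refine Module.End.hasEigenvalue_of_hasEigenvector (x := ⟨d j, hj⟩)
      ⟨Module.End.mem_eigenspace_iff.mpr (Subtype.ext ?_), fun h =>
        hA.d_ne_zero j (congrArg Subtype.val h)⟩
    have h1 := mem_eig.mp (hA.d_mem j)
    rw [hTa]
    simp [h1]

/-- The orthogonal of `L` for the Killing form of `L'` is `L`-stable; if it were nonzero it would
contain the constants, hence `L`, hence the Euler element, which is not isotropic. -/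
lemma eq_of_finiteDimensional (hL : IsThreeGraded e L) (hA : IsTransitive e d)
    {L' : LieSubalgebra ℂ A} (hle : L ≤ L') [FiniteDimensional ℂ L'] : L' = L := by
  have heL := hL.euler_mem hA
  have he := hle heL
  let K : Submodule ℂ L' := L.toSubmodule.comap L'.toSubmodule.subtype
  let P : Submodule ℂ L' := (killingForm ℂ L').orthogonal K
  have hstab : ∀ x ∈ L, ∀ y ∈ P.map L'.toSubmodule.subtype,
      ⁅x, y⁆ ∈ P.map L'.toSubmodule.subtype := by
    rintro x hx _ ⟨y, hy, rfl⟩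
    refine ⟨⁅(⟨x, hle hx⟩ : L'), y⁆, ?_, rfl⟩
    intro z hz
    change killingForm ℂ L' z ⁅(⟨x, hle hx⟩ : L'), y⁆ = 0
    rw [← LieModule.traceForm_apply_lie_apply]
    refine hy _ ?_
    exact L.lie_mem hz hx
  have hP : P = ⊥ := by
    by_contra hP
    have hP' : P.map L'.toSubmodule.subtype ≠ ⊥ := fun h =>
      hP (Submodule.map_injective_of_injective Subtype.val_injective
        (h.trans (Submodule.map_bot _).symm))
    have hc := hL.const_le_of_stable hA hP' hstab
    have hne : P.map L'.toSubmodule.subtype ⊓ L.toSubmodule ≠ ⊥ := by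
      intro h
      obtain ⟨j⟩ := hA.nonempty
      have : d j ∈ P.map L'.toSubmodule.subtype ⊓ L.toSubmodule :=
        ⟨hc (hA.d_mem j), hL.const_le (hA.d_mem j)⟩
      rw [h] at this
      exact hA.d_ne_zero j this
    obtain ⟨y, hy, hye⟩ := hL.le_of_stable hA hne hstab heL
    have : y = ⟨e, he⟩ := Subtype.ext hye
    subst this
    exact hL.killingForm_euler_ne_zero hA hle he (hy _ heL)
  have hcompl : IsCompl K P :=
    (LinearMap.BilinForm.isCompl_orthogonal_iff_disjoint
      (LieModule.traceForm_isSymm ℂ L' L').isRefl).mpr (by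
        change Disjoint K P
        rw [hP]; exact disjoint_bot_right)
  have hK : K = ⊤ := by simpa [hP] using hcompl.sup_eq_top
  refine le_antisymm (fun x hx => ?_) hle
  have : (⟨x, hx⟩ : L') ∈ K := hK ▸ Submodule.mem_top
  exact this

/-- An irreducible Lie algebra `H` of endomorphisms containing the scalars is its own normalizer:
the trace-free part of `H` is semisimple, so a normalizing element acts on it as some `y ∈ H`, and
the difference is a scalar by Schur's lemma. -/
lemma mem_of_normalizes {M : Type*} [AddCommGroup M] [Module ℂ M] [FiniteDimensional ℂ M]
    [Nontrivial M] (H : LieSubalgebra ℂ (Module.End ℂ M)) (h1 : (1 : Module.End ℂ M) ∈ H)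
    (hirr : ∀ F : Submodule ℂ M, (∀ f ∈ H, ∀ v ∈ F, f v ∈ F) → F = ⊥ ∨ F = ⊤)
    (g : Module.End ℂ M) (hg : ∀ f ∈ H, ⁅g, f⁆ ∈ H) : g ∈ H := by
  let K : LieSubalgebra ℂ (Module.End ℂ M) :=
    { H.toSubmodule ⊓ LinearMap.ker (LinearMap.trace ℂ M) with
      lie_mem' := fun {a b} ha hb => ⟨H.lie_mem ha.1 hb.1, by
        rw [SetLike.mem_coe, LinearMap.mem_ker, LinearMap.trace_lie]⟩ }
  have hK : ∀ f, f ∈ K ↔ f ∈ H ∧ LinearMap.trace ℂ M f = 0 := fun f => Iff.rfl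
  have hr : (Module.finrank ℂ M : ℂ) ≠ 0 := by
    exact_mod_cast (Module.finrank_pos (R := ℂ) (M := M)).ne.symm
  -- every element of `H` is a scalar plus an element of `K`
  have hdec : ∀ f ∈ H, ∃ c : ℂ, f - c • (1 : Module.End ℂ M) ∈ K := fun f hf =>
    ⟨LinearMap.trace ℂ M f / Module.finrank ℂ M, (hK _).mpr ⟨H.sub_mem hf (H.smul_mem _ h1), by
      rw [map_sub, map_smul, LinearMap.trace_one, smul_eq_mul, div_mul_cancel₀ _ hr, sub_self]⟩⟩
  have : LieModule.IsIrreducible ℂ K M := LieModule.IsIrreducible.mk fun N hN => by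
    have := hirr N.toSubmodule fun f hf v hv => by
      obtain ⟨c, hc⟩ := hdec f hf
      have h2 : (f - c • (1 : Module.End ℂ M)) v ∈ N.toSubmodule :=
        N.lie_mem (x := ⟨_, hc⟩) hv
      have h3 := add_mem h2 (N.toSubmodule.smul_mem c hv)
      simpa using h3
    rcases this with h | h
    · exact absurd (by simpa using h) hN
    · simpa using h
  have : LieAlgebra.HasTrivialRadical ℂ K :=
    LieAlgebra.hasTrivialRadical_of_isIrreducible_of_isFaithful ℂ K M fun x => x.2.2
  obtain ⟨y, hy, hgy⟩ := exists_lie_eq_of_hasTrivialRadical K g fun f hf =>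
    (hK _).mpr ⟨hg f hf.1, LinearMap.trace_lie ..⟩
  have hcomm : ∀ f ∈ H, ⁅g - y, f⁆ = 0 := fun f hf => by
    obtain ⟨c, hc⟩ := hdec f hf
    have h2 := hgy _ hc
    rw [← sub_eq_zero, ← sub_lie, lie_sub, lie_smul] at h2
    have h3 : ⁅g - y, (1 : Module.End ℂ M)⁆ = 0 := by simp [Ring.lie_def]
    rwa [h3, smul_zero, sub_zero] at h2
  obtain ⟨c, hc⟩ := Module.End.exists_eigenvalue (g - y)
  have h4 := (hirr (Module.End.eigenspace (g - y) c) fun f hf v hv => by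
    rw [Module.End.mem_eigenspace_iff] at hv ⊢
    have h5 := LinearMap.congr_fun (hcomm f hf) v
    rw [Ring.lie_def, LinearMap.sub_apply, Module.End.mul_apply, Module.End.mul_apply, hv, map_smul,
      LinearMap.zero_apply, sub_eq_zero] at h5
    exact h5).resolve_left hc
  have h6 : g = c • (1 : Module.End ℂ M) + y := by
    rw [← sub_eq_iff_eq_add]
    ext v
    have : v ∈ Module.End.eigenspace (g - y) c := h4 ▸ Submodule.mem_top
    simpa using Module.End.mem_eigenspace_iff.mp this
  rw [h6]
  exact H.add_mem (H.smul_mem _ h1) hy.1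

/-- The subalgebra of elements of degree `0`. -/
def degreeZero (e : A) : LieSubalgebra ℂ A :=
  { eig e 0 with
    lie_mem' := fun {a b} ha hb => by simpa using lie_mem_eig ha hb }

/-- The constants, as a representation of the subalgebra of elements of degree `0`. -/
def constants (e : A) : LieSubmodule ℂ (degreeZero e) A :=
  { eig e (-1) with
    lie_mem := fun {x m} hm => by simpa using lie_mem_eig x.2 hm }

/-- Let `S ⊇ L` be (the image of) an ideal of `L'`. In its action on the constants, the degree-`0`
part of `S` is irreducible, contains the scalars (through `e`) and is normalized by the degree-`0`
part of `L'`, so `mem_of_normalizes` shows that the two parts coincide. -/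
lemma mem_of_mem_eig_zero (hL : IsThreeGraded e L) (hA : IsTransitive e d)
    {L' : LieSubalgebra ℂ A} {S : Submodule ℂ A} (hLS : L.toSubmodule ≤ S)
    (hSL' : S ≤ L'.toSubmodule) (hstab : ∀ x ∈ L', ∀ y ∈ S, ⁅x, y⁆ ∈ S) {x : A} (hx : x ∈ L')
    (hx0 : x ∈ eig e 0) : x ∈ S := by
  let M := constants e
  have : FiniteDimensional ℂ M := hA.finite (-1)
  have : Nontrivial M := by
    obtain ⟨j⟩ := hA.nonempty
    exact ⟨⟨⟨d j, hA.d_mem j⟩, 0, fun h => hA.d_ne_zero j (congrArg Subtype.val h)⟩⟩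
  let ρ := LieModule.toEnd ℂ (degreeZero e) M
  let H₀ : LieSubalgebra ℂ (degreeZero e) :=
    { S.comap (degreeZero e).toSubmodule.subtype with
      lie_mem' := fun {a b} ha hb => hstab a.1 (hSL' ha) b.1 hb }
  have hρ : ρ ⟨x, hx0⟩ ∈ H₀.map ρ := by
    apply mem_of_normalizes
    · -- the Euler element acts on the constants as `-1`
      refine ⟨-⟨e, mem_eig.mpr (by simp)⟩, neg_mem (hLS (hL.euler_mem hA)), ?_⟩
      ext v
      have := mem_eig.mp v.2
      change ⁅-e, (v : A)⁆ = v
      rw [neg_lie, this]; simp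
    · intro F hF
      have := hL.irreducible (F.map M.toSubmodule.subtype) (by
        rintro _ ⟨v, hv, rfl⟩
        exact v.2) (by
        rintro z ⟨hz, hz0⟩ _ ⟨v, hv, rfl⟩
        exact ⟨_, hF (ρ ⟨z, hz0⟩) ⟨_, hLS hz, rfl⟩ v hv, rfl⟩)
      rcases this with h | h
      · left
        exact Submodule.map_injective_of_injective Subtype.val_injective
          (h.trans (Submodule.map_bot _).symm)
      · right
        rw [eq_top_iff]
        rintro v -
        have hv : (v : A) ∈ F.map M.toSubmodule.subtype := h ▸ v.2
        obtain ⟨w, hw, hwv⟩ := hv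
        rwa [← show w = v from Subtype.ext hwv]
    · rintro _ ⟨z, hz, rfl⟩
      exact ⟨⁅(⟨x, hx0⟩ : degreeZero e), z⁆, hstab x hx z.1 hz, LieHom.map_lie ρ _ _⟩
  obtain ⟨y, hy, hyx⟩ := hρ
  have h0 : y.1 - x = 0 := by
    refine eq_zero_of_mem_eig (p := 0) (q := -1) (by norm_num) (sub_mem y.2 hx0)
      (hA.mem_of_lie_eq_zero _ fun j => ?_)
    have := congrArg Subtype.val (LinearMap.congr_fun hyx (⟨d j, hA.d_mem j⟩ : M))
    change ⁅y.1, d j⁆ = ⁅x, d j⁆ at this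
    rw [← lie_skew, sub_lie, this, sub_self, neg_zero]
  rw [← sub_eq_zero.mp h0]
  exact hy

/-- If `S` contains `⁅e, L'⁆` and the part of degree `0` of `L'`, then `S` contains `L'`:
the components of nonzero degree of `x ∈ L'` are removed by applying `ad e - p`. -/
lemma mem_of_sum {L' : LieSubalgebra ℂ A} {S : Submodule ℂ A} (he : e ∈ L')
    (heS : ∀ x ∈ L', ⁅e, x⁆ ∈ S) (h0 : ∀ x ∈ L', x ∈ eig e 0 → x ∈ S) (s : Finset ℤ) :
    ∀ (x : A) (u : ℤ → A), x ∈ L' → (∀ p, u p ∈ eig e p) → x = ∑ p ∈ s, u p → x ∈ S := by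
  induction s using Finset.strongInduction with
  | H s ih =>
    intro x u hx hu hxu
    by_cases hs : ∃ p ∈ s, p ≠ 0
    · obtain ⟨p, hp, hp0⟩ := hs
      have hmem : ⁅e, x⁆ - (p : ℂ) • x ∈ S := by
        refine ih (s.erase p) (Finset.erase_ssubset hp) _ (fun q => ((q : ℂ) - p) • u q)
          (sub_mem (L'.lie_mem he hx) (L'.smul_mem _ hx)) (fun q => Submodule.smul_mem _ _ (hu q)) ?_
        rw [Finset.sum_erase _ (by simp), hxu, lie_sum, Finset.smul_sum, ← Finset.sum_sub_distrib]
        exact Finset.sum_congr rfl fun q _ => by rw [mem_eig.mp (hu q), sub_smul]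
      have h2 : (p : ℂ) • x ∈ S := by
        simpa using sub_mem (heS x hx) hmem
      exact (Submodule.smul_mem_iff _ (by exact_mod_cast hp0)).mp h2
    · push Not at hs
      refine h0 x hx ?_
      rw [hxu]
      exact sum_mem fun p hp => hs p hp ▸ hu p

/-- A nonzero ideal of `L'` contains the constants, hence `L` and the Euler element, hence
`⁅e, L'⁆`; `mem_of_sum` and `mem_of_mem_eig_zero` then show that it is everything. -/
theorem isSimple (hL : IsThreeGraded e L) (hA : IsTransitive e d) {L' : LieSubalgebra ℂ A}
    (hle : L ≤ L') : LieAlgebra.IsSimple ℂ L' := by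
  have heL := hL.euler_mem hA
  obtain ⟨j⟩ := hA.nonempty
  refine ⟨fun I => ?_, fun hab => ?_⟩
  · refine or_iff_not_imp_left.mpr fun hI => ?_
    have hstab : ∀ x ∈ L', ∀ y ∈ idealImage L' I, ⁅x, y⁆ ∈ idealImage L' I :=
      fun x hx y hy => lie_mem_idealImage hx hy
    have hSL' : idealImage L' I ≤ L'.toSubmodule := fun x hx => (mem_idealImage.mp hx).1
    have hc := hL.const_le_of_stable hA (idealImage_ne_bot hI) fun x hx => hstab x (hle hx)
    have hLS : L.toSubmodule ≤ idealImage L' I := by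
      refine hL.le_of_stable hA (fun h => ?_) fun x hx => hstab x (hle hx)
      have : d j ∈ idealImage L' I ⊓ L.toSubmodule :=
        ⟨hc (hA.d_mem j), hL.const_le (hA.d_mem j)⟩
      rw [h] at this
      exact hA.d_ne_zero j this
    rw [eq_top_iff]
    rintro x -
    obtain ⟨s, u, hu, hx⟩ := hA.exists_sum x
    refine (mem_idealImage.mp (mem_of_sum (S := idealImage L' I) (hle heL) (fun y hy => ?_)
      (fun y hy hy0 => hL.mem_of_mem_eig_zero hA hLS hSL' hstab hy hy0) s x u x.2 hu hx)).2
    rw [← lie_skew]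
    exact neg_mem (hstab y hy e (hLS heL))
  · have h := hab.trivial (⟨e, hle heL⟩ : L') ⟨d j, hle (hL.const_le (hA.d_mem j))⟩
    have h2 : ⁅e, d j⁆ = 0 := congrArg Subtype.val h
    rw [mem_eig.mp (hA.d_mem j)] at h2
    exact hA.d_ne_zero j (by simpa using h2)

end IsThreeGraded

end Graded

/-! ### Polynomial vector fields -/

/-- The homogeneous component of degree `p` of a vector field; its coefficients have degree
`p + 1`. -/
noncomputable def vcomponent {n : ℕ} (D : Vect ℂ n) (p : ℤ) : Vect ℂ n :=
  if p < -1 then 0 else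
    mkDerivation ℂ fun i => homogeneousComponent (p + 1).toNat (D (X i))

lemma vcoeff_vcomponent {n : ℕ} (D : Vect ℂ n) (p : ℤ) (i : Fin n) (m : Fin n →₀ ℕ) :
    vcoeff i m (vcomponent D p) = if (m.degree : ℤ) = p + 1 then vcoeff i m D else 0 := by
  unfold vcomponent
  by_cases hp : p < -1
  · rw [if_pos hp, map_zero, if_neg (by omega)]
  · rw [if_neg hp]
    simp only [vcoeff, LinearMap.coe_mk, AddHom.coe_mk, mkDerivation_X, coeff_homogeneousComponent]
    exact if_congr (by omega) rfl rfl

lemma exists_sum_vcomponent {n : ℕ} (D : Vect ℂ n) :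
    ∃ s : Finset ℤ, D = ∑ p ∈ s, vcomponent D p := by
  obtain ⟨N, hN⟩ := exists_degree_bound D
  refine ⟨Finset.Ico (-1) N, vect_ext fun i m => ?_⟩
  rw [map_sum, Finset.sum_eq_single ((m.degree : ℤ) - 1)]
  · rw [vcoeff_vcomponent, if_pos (by ring)]
  · intro p _ hp
    rw [vcoeff_vcomponent, if_neg (by omega)]
  · intro hm
    rw [vcoeff_vcomponent, if_pos (by ring)]
    by_contra h
    have := hN i m h
    exact hm (Finset.mem_Ico.mpr (by omega))

/-- The polynomial vector fields have the properties listed in `IsTransitive`; `eig (euler ℂ n) p`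
unfolds to `VectP ℂ n p`, and `ad e` acts on the coefficient of `x^m` as `|m| - 1`. -/
lemma isTransitive_vect {n : ℕ} (hn : 0 < n) :
    IsTransitive (euler ℂ n) fun j => (pderiv j : Vect ℂ n) where
  nonempty := ⟨⟨0, hn⟩⟩
  d_ne_zero := pderiv_ne_zero
  d_mem := pderiv_mem_VectP
  mem_of_lie_eq_zero _ := mem_VectP_neg_one_of_lie_pderiv
  inf_ne_bot _ := exists_const_mem
  finite := finiteDimensional_VectP
  exists_sum D := by
    obtain ⟨s, hs⟩ := exists_sum_vcomponent D
    refine ⟨s, vcomponent D, fun p => ?_, hs⟩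
    refine mem_VectP_iff_vcoeff.mpr fun i m hm => ?_
    rw [vcoeff_vcomponent] at hm
    by_contra h
    exact hm (if_neg h)
  sq_eigenvalue D hD c hc := by
    obtain ⟨i, m, hm⟩ : ∃ i m, vcoeff i m D ≠ 0 := by
      by_contra! h
      exact hD (vect_ext fun i m => by rw [h i m, map_zero])
    have h := vcoeff_lie_euler i m ⁅euler ℂ n, D⁆
    rw [hc, vcoeff_lie_euler, map_smul, smul_eq_mul, ← mul_assoc] at h
    refine ⟨(((m.degree : ℤ) - 1) ^ 2).toNat, ?_⟩
    have h2 : (((((m.degree : ℤ) - 1) ^ 2).toNat : ℤ) : ℂ) = ((((m.degree : ℤ) - 1) ^ 2 : ℤ) : ℂ) := by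
      rw [Int.toNat_of_nonneg (sq_nonneg _)]
    rw [Int.cast_natCast] at h2
    rw [h2, mul_right_cancel₀ hm h]
    push_cast
    ring

/-- Let `E = ℂ^n` (`n ≥ 1`) and `L = L₋₁ ⊕ L₀ ⊕ L₁` an irreducible graded Lie subalgebra of
`Vect_pol(E)` with `L₋₁ = Vect₋₁(E)` and `L₁ ≠ 0`.  If a Lie subalgebra `L'` of
`Vect_pol(E)` contains `L` properly, then `L'` is infinite-dimensional and simple. -/
theorem statement15 (n : ℕ) (hn : 0 < n)
    (L : LieSubalgebra ℂ (Vect ℂ n))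
    (hgraded : L.toSubmodule =
      (L.toSubmodule ⊓ VectP ℂ n (-1)) ⊔ (L.toSubmodule ⊓ VectP ℂ n 0) ⊔
        (L.toSubmodule ⊓ VectP ℂ n 1))
    (hm1 : L.toSubmodule ⊓ VectP ℂ n (-1) = VectP ℂ n (-1))
    (hirr : IsIrreducibleRep ℂ n L)
    (h1 : L.toSubmodule ⊓ VectP ℂ n 1 ≠ ⊥)
    (L' : LieSubalgebra ℂ (Vect ℂ n)) (hlt : L < L') :
    ¬ FiniteDimensional ℂ L' ∧ LieAlgebra.IsSimple ℂ L' := by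
  have hA := isTransitive_vect hn
  have hL : IsThreeGraded (euler ℂ n) L :=
    { le_sup := hgraded.le
      const_le := inf_eq_right.mp hm1
      irreducible := fun F hF hstab => by
        have h := hirr.2 F (hF.trans hm1.ge) hstab
        rw [hm1] at h
        exact h
      ne_bot := h1 }
  exact ⟨fun _ => hlt.ne (hL.eq_of_finiteDimensional hA hlt.le).symm, hL.isSimple hA hlt.le⟩
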